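/- Let d = (d_1,…,d_n) be a graphical degree sequence with minimum entry δ and maximum entry Δ. If (Δ − δ + 1)² ≤ 4δ(n − Δ − 1), then k_JS(d) ≤ 6; that is, every graph in G'(d) can be transformed into an element of G(d) by at most 6 JS-adjacent steps within G'(d). -/

import Mathlib

/-!
A graph of `𝒢'(d)` that is not a realization has, by parity, total deficit two: one unit at each of
two vertices `s`, `t`, or two units at `s = t` (`exists_deficit`). A step along a non-edge `sj`
followed by an edge `jk` moves one unit from `s` to `k`, so an alternating trail between `s` and `t`
that starts and ends with non-edges and has `k` non-edges gives a realization after `k` steps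
(`Aug.step`, `Aug.final`).

Suppose that no trail with at most five non-edges exists. If `a` is a non-neighbour of `s` and `b`
one of `t`, with the same neighbourhood `X` outside `{s, t}`, then `{s, t} ∪ X` is a clique, since
a non-adjacent pair would close a short trail. Call a vertex `r` outside it bad if it has fewer
than `δ` neighbours in it. The neighbours of bad vertices can be reached by trails of two further
pairs, so adding them all leaves a clique `K`. Every vertex outside `K` now has at least `δ`
neighbours in `K`. With `q = |K|`, counting degrees in `K` gives `q(q-1) + δ(n-q) ≤ qΔ - 2`, which
implies `(Δ + 1 + δ)² ≥ 4δn + 8` and contradicts `(Δ - δ + 1)² ≤ 4δ(n - Δ - 1)` (`no_clique`).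
This is `core`, and it bounds the distance by five.

Suitable `a` and `b` exist, possibly after one preliminary step. If `s ≠ t` have a common
non-neighbour, take `a = b` (`common_nonadj`). If `s = t`, either all non-neighbours of `s` have the
same neighbourhood, or one step reaches the previous case (`double_deficit`). If `s ≠ t` have no
common non-neighbour, again either one step reaches the first case, or all non-neighbours of `s` or
`t` have the same neighbourhood outside `{s, t}` (`distinct_deficit`). The total is at most six.
-/

open SimpleGraph
open scoped symmDiff

/-- The degree of vertex `v` in graph `G`. -/
noncomputable def deg {n : ℕ} (G : SimpleGraph (Fin n)) (v : Fin n) : ℕ :=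
  (G.neighborSet v).ncard

/-- `G ∈ 𝒢(d)`: vertex `i` has degree `d i` for every `i`. -/
def memG {n : ℕ} (d : Fin n → ℕ) (G : SimpleGraph (Fin n)) : Prop :=
  ∀ v, deg G v = d v

/-- `G ∈ 𝒢'(d)`: the degree sequence of `G` is componentwise at most `d`,
with total deficit at most `2`. -/
def memG' {n : ℕ} (d : Fin n → ℕ) (G : SimpleGraph (Fin n)) : Prop :=
  (∀ v, deg G v ≤ d v) ∧ ∑ v, (d v - deg G v) ≤ 2

/-- A single (directed) move of the Jerrum–Sinclair chain from `G` to `H`: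
Type 0 (delete an edge when `G ∈ 𝒢(d)`), Type 2 (add an edge between two
deficient vertices), or Type 1 (add an edge to a deficient vertex and delete
an edge at the other endpoint). -/
def jsStep {n : ℕ} (d : Fin n → ℕ) (G H : SimpleGraph (Fin n)) : Prop :=
  (memG d G ∧ ∃ u v : Fin n, G.Adj u v ∧ H = G.deleteEdges {s(u, v)}) ∨
  (¬ memG d G ∧ ∃ i j : Fin n, i ≠ j ∧ ¬ G.Adj i j ∧ deg G i < d i ∧ deg G j < d j ∧
      H = G ⊔ fromEdgeSet {s(i, j)}) ∨
  (¬ memG d G ∧ ∃ i j k : Fin n, i ≠ j ∧ ¬ G.Adj i j ∧ deg G i < d i ∧ deg G j = d j ∧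
      G.Adj j k ∧ H = (G ⊔ fromEdgeSet {s(i, j)}).deleteEdges {s(j, k)})

/-- `G` and `H` are JS adjacent. -/
def jsAdj {n : ℕ} (d : Fin n → ℕ) (G H : SimpleGraph (Fin n)) : Prop :=
  jsStep d G H ∨ jsStep d H G

/-- There is a walk of exactly `m` JS-adjacent steps from `G` to `H`, all of
whose states lie in `𝒢'(d)`. -/
def jsChain {n : ℕ} (d : Fin n → ℕ) (m : ℕ) (G H : SimpleGraph (Fin n)) : Prop :=
  ∃ f : ℕ → SimpleGraph (Fin n), f 0 = G ∧ f m = H ∧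
    (∀ i ≤ m, memG' d (f i)) ∧ (∀ i < m, jsAdj d (f i) (f (i+1)))

/-- The JS distance between `G` and `H` (within `𝒢'(d)`) is at most `k`. -/
def jsDistLe {n : ℕ} (d : Fin n → ℕ) (k : ℕ) (G H : SimpleGraph (Fin n)) : Prop :=
  ∃ m ≤ k, jsChain d m G H


/-! ### Chains of steps and alternating trails -/

open Classical in
/-- `Deficit d G s t`: the degrees of `G` fall short of `d` by exactly one unit at `s` and one unit
at `t` (so by two units at `s` when `s = t`), and agree with `d` elsewhere. -/
def Deficit {n : ℕ} (d : Fin n → ℕ) (G : SimpleGraph (Fin n)) (s t : Fin n) : Prop :=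
  ∀ v, deg G v + (if v = s then 1 else 0) + (if v = t then 1 else 0) = d v

/-- Some realization of `d` is within JS distance `k` of `G`. -/
def Sol {n : ℕ} (d : Fin n → ℕ) (k : ℕ) (G : SimpleGraph (Fin n)) : Prop :=
  ∃ H : SimpleGraph (Fin n), memG d H ∧ jsDistLe d k G H

section chains

variable {n : ℕ} {d : Fin n → ℕ} {G : SimpleGraph (Fin n)} {s t : Fin n}

theorem Deficit.symm (h : Deficit d G s t) : Deficit d G t s := by
  intro v
  have := h v
  omega

theorem Sol.mono {k m : ℕ} (h : Sol d k G) (hkm : k ≤ m) : Sol d m G := by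
  obtain ⟨H, hH, l, hl, hc⟩ := h
  exact ⟨H, hH, l, hl.trans hkm, hc⟩

theorem Sol.of_memG' (h : memG d G) (h' : memG' d G) (k : ℕ) : Sol d k G :=
  ⟨G, h, 0, Nat.zero_le _, fun _ => G, rfl, rfl, fun _ _ => h', by simp⟩

theorem Sol.cons {G' : SimpleGraph (Fin n)} {k : ℕ} (h : memG' d G) (hadj : jsAdj d G G')
    (hs : Sol d k G') : Sol d (k + 1) G := by
  obtain ⟨H, hH, l, hl, f, h0, hm, hmem, hstep⟩ := hs
  refine ⟨H, hH, l + 1, by omega, fun i => Nat.casesOn i G f, rfl, hm, ?_, ?_⟩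
  · rintro (_ | i) hi
    · exact h
    · exact hmem i (by omega)
  · rintro (_ | i) hi
    · simpa [h0] using hadj
    · exact hstep i (by omega)

open Classical in
theorem deg_eq_card (G : SimpleGraph (Fin n)) (v : Fin n) :
    deg G v = (Finset.univ.filter (fun w => G.Adj v w)).card := by
  unfold deg
  rw [← Set.ncard_coe_finset]
  congr 1
  ext w
  simp

theorem deg_add {i j : Fin n} (hij : i ≠ j) (h : ¬ G.Adj i j) (v : Fin n) :
    deg (G ⊔ fromEdgeSet {s(i, j)}) v =
      deg G v + (if v = i then 1 else 0) + (if v = j then 1 else 0) := by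
  unfold deg
  by_cases h1 : v = i
  · subst h1
    have : (G ⊔ fromEdgeSet {s(v, j)}).neighborSet v = insert j (G.neighborSet v) := by
      ext w
      simp only [mem_neighborSet, sup_adj, fromEdgeSet_adj, Set.mem_singleton_iff, Sym2.eq_iff,
        Set.mem_insert_iff]
      grind
    rw [this, Set.ncard_insert_of_notMem (by simpa using h)]
    simp [hij]
  · by_cases h2 : v = j
    · subst h2
      have : (G ⊔ fromEdgeSet {s(i, v)}).neighborSet v = insert i (G.neighborSet v) := by
        ext w
        simp only [mem_neighborSet, sup_adj, fromEdgeSet_adj, Set.mem_singleton_iff, Sym2.eq_iff,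
          Set.mem_insert_iff]
        grind
      rw [this, Set.ncard_insert_of_notMem (by simpa [G.adj_comm] using h)]
      simp [h1]
    · have : (G ⊔ fromEdgeSet {s(i, j)}).neighborSet v = G.neighborSet v := by
        ext w
        simp only [mem_neighborSet, sup_adj, fromEdgeSet_adj, Set.mem_singleton_iff, Sym2.eq_iff]
        grind
      simp [this, h1, h2]

theorem deg_delete {j k : Fin n} (h : G.Adj j k) (v : Fin n) :
    deg (G.deleteEdges {s(j, k)}) v + (if v = j then 1 else 0) + (if v = k then 1 else 0) =
      deg G v := by
  have hjk := h.ne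
  have key := deg_add (G := G.deleteEdges {s(j, k)}) hjk (by simp [deleteEdges_adj]) v
  rw [← key]
  congr 1
  ext u w
  simp only [sup_adj, deleteEdges_adj, fromEdgeSet_adj, Set.mem_singleton_iff, Sym2.eq_iff]
  have := h.symm
  have hw : G.Adj u w → u ≠ w := fun h => h.ne
  grind

theorem Deficit.memG' (h : Deficit d G s t) : memG' d G := by
  refine ⟨fun v => by have := h v; omega, ?_⟩
  have : ∀ v, d v - deg G v = (if v = s then 1 else 0) + (if v = t then 1 else 0) := by
    intro v
    have := h v
    omega
  simp [this, Finset.sum_add_distrib]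

theorem Deficit.lt_left (h : Deficit d G s t) : deg G s < d s := by
  have := h s
  simp at this
  omega

theorem Deficit.not_memG (h : Deficit d G s t) : ¬ memG d G := fun hm =>
  absurd (hm s) h.lt_left.ne

/-- A Type 2 step finishes when the two deficient vertices are non-adjacent. -/
theorem Sol.final (h : Deficit d G s t) (hst : s ≠ t) (hadj : ¬ G.Adj s t) (k : ℕ) :
    Sol d (k + 1) G := by
  have hm : memG d (G ⊔ fromEdgeSet {s(s, t)}) := fun v => by
    rw [deg_add hst hadj]; exact h v
  refine Sol.cons h.memG' (Or.inl (Or.inr (Or.inl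
    ⟨h.not_memG, s, t, hst, hadj, h.lt_left, h.symm.lt_left, rfl⟩))) (Sol.of_memG' hm ?_ _)
  exact ⟨fun v => (hm v).le, by simp [hm _]⟩

/-- A Type 1 step moves one unit of deficit from `s` to `k` along a non-edge `sj` followed by an
edge `jk`. -/
theorem Sol.step {j k : Fin n} {m : ℕ} (h : Deficit d G s t) (hjs : j ≠ s) (hjt : j ≠ t)
    (hsj : ¬ G.Adj s j) (hjk : G.Adj j k)
    (hnext : ∀ G' : SimpleGraph (Fin n), Deficit d G' k t →
      (∀ u v, G'.Adj u v ↔ (G.Adj u v ∨ s(u, v) = s(s, j)) ∧ s(u, v) ≠ s(j, k)) → Sol d m G') :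
    Sol d (m + 1) G := by
  have hdj : deg G j = d j := by simpa [hjs, hjt] using h j
  refine Sol.cons h.memG' (Or.inl (Or.inr (Or.inr
    ⟨h.not_memG, s, j, k, hjs.symm, hsj, h.lt_left, hdj, hjk, rfl⟩))) (hnext _ ?_ ?_)
  · intro v
    have h1 := deg_add hjs.symm hsj v
    have h2 := deg_delete (G := G ⊔ fromEdgeSet {s(s, j)}) (j := j) (k := k) (by simp [hjk]) v
    have := h v
    omega
  · intro u v
    simp only [deleteEdges_adj, sup_adj, fromEdgeSet_adj, Set.mem_singleton_iff, Sym2.eq_iff]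
    grind

/-- `Aug d G N E s t m`: whenever a graph is obtained from `G` by adding the pairs in `N` and
deleting the edges in `E`, and has deficits at `s` and `t`, it is within `m` steps of a realization
of `d`. In the applications `N` and `E` are the non-edges and edges of `G` that an alternating
trail has used so far. -/
def Aug (d : Fin n → ℕ) (G : SimpleGraph (Fin n)) (N E : Set (Sym2 (Fin n))) (s t : Fin n)
    (m : ℕ) : Prop :=
  (∀ u v, s(u, v) ∈ E → G.Adj u v) → ∀ G' : SimpleGraph (Fin n), Deficit d G' s t →
    (∀ u v, G'.Adj u v ↔ (G.Adj u v ∨ s(u, v) ∈ N) ∧ s(u, v) ∉ E) → Sol d m G'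

variable {N E : Set (Sym2 (Fin n))} {m : ℕ}

theorem Aug.sol (h : Aug d G ∅ ∅ s t m) (hG : Deficit d G s t) : Sol d m G :=
  h (by simp) G hG (by simp)

theorem Aug.swap (h : Aug d G N E t s m) : Aug d G N E s t m :=
  fun hE G' hG' => h hE G' hG'.symm

/-- A trail closes when its two ends are non-adjacent in `G` and their pair is unused. -/
theorem Aug.final (hst : s ≠ t) (hadj : ¬ G.Adj s t) (hN : s(s, t) ∉ N) :
    Aug d G N E s t (m + 1) := by
  intro _ G' hG' hA
  exact Sol.final hG' hst (by rw [hA]; tauto) m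

/-- Extending a trail by an unused non-edge `sj` and an unused edge `jk`. -/
theorem Aug.step {j k : Fin n} (hjs : j ≠ s) (hjt : j ≠ t) (hsj : ¬ G.Adj s j) (hjk : G.Adj j k)
    (hN : s(s, j) ∉ N) (hE : s(j, k) ∉ E)
    (hnext : Aug d G (insert s(s, j) N) (insert s(j, k) E) k t m) :
    Aug d G N E s t (m + 1) := by
  intro hEG G' hG' hA
  refine Sol.step hG' hjs hjt (by rw [hA]; tauto) (by rw [hA]; tauto) (fun G'' hG'' hA' => ?_)
  refine hnext ?_ G'' hG'' ?_
  · intro u v huv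
    rcases huv with huv | huv
    · rw [Sym2.eq_iff] at huv
      rcases huv with ⟨rfl, rfl⟩ | ⟨rfl, rfl⟩
      exacts [hjk, hjk.symm]
    · exact hEG u v huv
  · intro u v
    rw [hA', hA]
    -- The new pair `sj` is not in `E`, because `E` consists of edges of `G`.
    have h1 : s(u, v) = s(s, j) → s(u, v) ∉ E := fun he hmem =>
      hsj (hEG s j (he ▸ hmem))
    simp only [Set.mem_insert_iff]
    tauto

end chains

/-! ### The counting argument -/

section counting

variable {n : ℕ} {d : Fin n → ℕ} {G : SimpleGraph (Fin n)} {s t : Fin n}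

open Classical in
/-- Double counting the edges between a clique `K` containing both deficient vertices and its
complement: if `|K| = q` and every outside vertex has at least `δ` neighbours in `K`, then
`q(q-1) + δ(n-q) ≤ qΔ - 2`, a quadratic inequality in `q` whose discriminant is negative. -/
theorem no_clique {δ Δ : ℕ} (hΔle : ∀ v, d v ≤ Δ)
    (hineq : ((Δ : ℤ) - (δ : ℤ) + 1) ^ 2 ≤ 4 * (δ : ℤ) * ((n : ℤ) - (Δ : ℤ) - 1))
    (h : Deficit d G s t) (K : Finset (Fin n)) (hs : s ∈ K) (ht : t ∈ K)
    (hclique : ∀ u ∈ K, ∀ v ∈ K, u ≠ v → G.Adj u v)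
    (hout : ∀ v, v ∉ K → δ ≤ (K.filter (fun w => G.Adj v w)).card) : False := by
  have hdeg : ∀ v ∈ K, (deg G v : ℤ) = ((K.card : ℤ) - 1) +
      ((Kᶜ.filter (fun w => G.Adj v w)).card : ℤ) := by
    intro v hv
    rw [deg_eq_card]
    have h1 : (Finset.univ.filter (fun w => G.Adj v w)) =
        K.erase v ∪ Kᶜ.filter (fun w => G.Adj v w) := by
      ext w
      simp only [Finset.mem_filter, Finset.mem_univ, true_and, Finset.mem_union, Finset.mem_erase,
        Finset.mem_compl]
      have hne : G.Adj v w → v ≠ w := fun h => h.ne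
      have := hclique v hv w
      grind
    rw [h1, Finset.card_union_of_disjoint, Finset.card_erase_of_mem hv]
    · have : 1 ≤ K.card := Finset.card_pos.2 ⟨v, hv⟩
      push_cast [this]
      ring
    · rw [Finset.disjoint_left]
      intro w hw hw'
      simp only [Finset.mem_filter, Finset.mem_erase, Finset.mem_compl] at hw hw'
      exact hw'.1 hw.2
  have hcross : ∑ v ∈ K, (Kᶜ.filter (fun w => G.Adj v w)).card =
      ∑ v ∈ Kᶜ, (K.filter (fun w => G.Adj v w)).card := by
    have := Finset.sum_card_bipartiteAbove_eq_sum_card_bipartiteBelow (s := K) (t := Kᶜ)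
      (fun v w => G.Adj v w)
    simp only [Finset.bipartiteAbove, Finset.bipartiteBelow] at this
    rw [this]
    simp only [G.adj_comm]
  have hlow : δ * Kᶜ.card ≤ ∑ v ∈ Kᶜ, (K.filter (fun w => G.Adj v w)).card := by
    rw [mul_comm, ← smul_eq_mul]
    exact Finset.card_nsmul_le_sum _ _ _ (fun v hv => hout v (by simpa using hv))
  have hcard : Kᶜ.card + K.card = n := by
    simp
  have hup : ∑ v ∈ K, deg G v + 2 ≤ K.card * Δ := by
    have h1 : ∑ v ∈ K, d v ≤ K.card * Δ := by
      rw [← smul_eq_mul]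
      exact Finset.sum_le_card_nsmul _ _ _ (fun v _ => hΔle v)
    have h2 : ∑ v ∈ K, d v = ∑ v ∈ K, deg G v + 2 := by
      simp only [← h _, Finset.sum_add_distrib, Finset.sum_ite_eq', hs, ht, if_true]
    omega
  have hsum : ((∑ v ∈ K, deg G v : ℕ) : ℤ) = (K.card : ℤ) * ((K.card : ℤ) - 1) +
      ((∑ v ∈ Kᶜ, (K.filter (fun w => G.Adj v w)).card : ℕ) : ℤ) := by
    rw [← hcross]
    push_cast
    rw [Finset.sum_congr rfl hdeg, Finset.sum_add_distrib, Finset.sum_const, nsmul_eq_mul]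
  zify at hlow hup hcard
  push_cast at hsum
  have hc : (Kᶜ.card : ℤ) = n - K.card := by linarith
  rw [hc] at hlow
  nlinarith [sq_nonneg (2 * (K.card : ℤ) - (Δ + 1 + δ))]

open Classical in
/-- A deficient vertex has at least two non-neighbours, since the hypothesis forces `n ≥ Δ + 2`. -/
theorem two_le_card_nonadj {δ Δ : ℕ} (hΔle : ∀ v, d v ≤ Δ) (hδΔ : δ ≤ Δ)
    (hineq : ((Δ : ℤ) - (δ : ℤ) + 1) ^ 2 ≤ 4 * (δ : ℤ) * ((n : ℤ) - (Δ : ℤ) - 1))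
    (h : Deficit d G s t) : ∃ a b, a ≠ b ∧ a ≠ s ∧ b ≠ s ∧ ¬ G.Adj s a ∧ ¬ G.Adj s b := by
  have hn : Δ + 2 ≤ n := by
    by_contra hcon
    have h1 : (n : ℤ) - Δ - 1 ≤ 0 := by omega
    have h2 : (0 : ℤ) ≤ δ := by positivity
    have h3 : (1 : ℤ) ≤ Δ - δ + 1 := by omega
    nlinarith
  have hd : deg G s + 1 ≤ Δ := h.lt_left.trans_le (hΔle s)
  rw [deg_eq_card] at hd
  have hc := Finset.card_filter_add_card_filter_not (s := (Finset.univ : Finset (Fin n)))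
    (fun w => G.Adj s w)
  rw [Finset.card_univ, Fintype.card_fin] at hc
  have he : 1 < ((Finset.univ.filter (fun w => ¬ G.Adj s w)).erase s).card := by
    rw [Finset.card_erase_of_mem (by simp)]
    omega
  obtain ⟨a, ha, b, hb, hab⟩ := Finset.one_lt_card.1 he
  simp at ha hb
  exact ⟨a, b, hab, ha.1, hb.1, ha.2, hb.2⟩

end counting

/-! ### Augmentation along alternating trails -/

section core

variable {n : ℕ} {d : Fin n → ℕ} {G : SimpleGraph (Fin n)} {s t : Fin n}

set_option maxHeartbeats 4000000 in
open Classical in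
/-- The augmentation argument. The deficits sit at `s` and `t` (possibly `s = t`), and `sa`, `tb`
are two different non-edges with `N(a)` and `N(b)` equal to the same set `X` outside `{s, t}`, so
that a deficit at either of `s`, `t` can be moved to any vertex of `X`. By `hbad`, every vertex
outside `{s, t} ∪ X` has `δ` neighbours in that set, or misses two vertices of `X`, or is a common
non-neighbour of `s ≠ t`. The second alternative provides two choices for the vertex through which
an alternating trail reaches `r`, which keeps the trails from `s` and from `t` disjoint. -/
theorem core {δ Δ : ℕ} (hδle : ∀ v, δ ≤ d v) (hΔle : ∀ v, d v ≤ Δ)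
    (hineq : ((Δ : ℤ) - (δ : ℤ) + 1) ^ 2 ≤ 4 * (δ : ℤ) * ((n : ℤ) - (Δ : ℤ) - 1))
    (h : Deficit d G s t) {a b : Fin n} (has : a ≠ s) (hat : a ≠ t) (hbs : b ≠ s) (hbt : b ≠ t)
    (hsa : ¬ G.Adj s a) (htb : ¬ G.Adj t b) (hab : s = t → a ≠ b)
    (hX : ∀ v, v ≠ s → v ≠ t → (G.Adj a v ↔ G.Adj b v))
    (hbad : ∀ r, r ≠ s → r ≠ t → ¬ G.Adj a r →
      δ ≤ (Finset.univ.filter (fun v => (v = s ∨ v = t ∨ G.Adj a v) ∧ G.Adj r v)).card ∨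
      (∃ x y, x ≠ y ∧ x ≠ s ∧ x ≠ t ∧ y ≠ s ∧ y ≠ t ∧ G.Adj a x ∧ G.Adj a y ∧
        ¬ G.Adj r x ∧ ¬ G.Adj r y) ∨
      (s ≠ t ∧ ¬ G.Adj s r ∧ ¬ G.Adj t r)) :
    Sol d 5 G := by
  by_contra hsol
  have hcomm : ∀ u v, G.Adj u v → G.Adj v u := fun _ _ h => h.symm
  have hirr : ∀ v, ¬ G.Adj v v := fun v => G.loopless.irrefl v
  -- In what follows two non-adjacent members of the prospective clique always close up an
  -- alternating trail between `s` and `t`; the comments list its vertices.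
  have hst : s ≠ t → G.Adj s t := by
    intro hne
    by_contra hc
    exact hsol ((Sol.final h hne hc 0).mono (by norm_num))
  -- trail `s a x t`
  have hXt : ∀ x, x ≠ s → x ≠ t → G.Adj a x → G.Adj x t := by
    intro x hxs hxt hax
    by_contra hc
    refine hsol (Sol.mono (k := 2) (Aug.sol (Aug.step (j := a) (k := x) ?_ ?_ ?_ ?_ ?_ ?_
      (Aug.final ?_ ?_ ?_)) h) (by norm_num))
    all_goals try simp only [Set.mem_insert_iff, Set.mem_empty_iff_false, Sym2.eq_iff, or_false]
    all_goals grind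
  -- trail `t b x s`
  have hXs : ∀ x, x ≠ s → x ≠ t → G.Adj a x → G.Adj x s := by
    intro x hxs hxt hax
    by_contra hc
    refine hsol (Sol.mono (k := 2) (Aug.sol (Aug.step (j := b) (k := x) ?_ ?_ ?_ ?_ ?_ ?_
      (Aug.final ?_ ?_ ?_)) h.symm) (by norm_num))
    all_goals try simp only [Set.mem_insert_iff, Set.mem_empty_iff_false, Sym2.eq_iff, or_false]
    all_goals grind
  -- trail `s a x y b t`
  have hXX : ∀ x, x ≠ s → x ≠ t → G.Adj a x → ∀ y, y ≠ s → y ≠ t → G.Adj a y → x ≠ y →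
      G.Adj x y := by
    intro x hxs hxt hax y hys hyt hay hxy
    by_contra hc
    refine hsol (Sol.mono (k := 3) (Aug.sol (Aug.step (j := a) (k := x) ?_ ?_ ?_ ?_ ?_ ?_
      (Aug.swap (Aug.step (j := b) (k := y) ?_ ?_ ?_ ?_ ?_ ?_
      (Aug.final ?_ ?_ ?_)))) h) (by norm_num))
    all_goals try simp only [Set.mem_insert_iff, Set.mem_empty_iff_false, Sym2.eq_iff, or_false]
    all_goals grind
  -- The vertices that may have too few neighbours in `{s, t} ∪ X` are of two kinds. A neighbour of
  -- one of them can be given a deficit by the trail `s a x r z` if `P1 r` and `s r z` if `P2 r`.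
  let P1 : Fin n → Prop := fun r => ∃ x y, x ≠ y ∧ x ≠ s ∧ x ≠ t ∧ y ≠ s ∧ y ≠ t ∧
    G.Adj a x ∧ G.Adj a y ∧ ¬ G.Adj r x ∧ ¬ G.Adj r y
  let P2 : Fin n → Prop := fun r => s ≠ t ∧ ¬ G.Adj s r ∧ ¬ G.Adj t r
  have pick : ∀ r, P1 r → ∀ y, ∃ x, x ≠ y ∧ x ≠ s ∧ x ≠ t ∧ G.Adj a x ∧ ¬ G.Adj r x := by
    rintro r ⟨x, x', hne, h1, h2, h3, h4, h5, h6, h7, h8⟩ y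
    by_cases hy : x = y
    · exact ⟨x', by grind, h3, h4, h6, h8⟩
    · exact ⟨x, hy, h1, h2, h5, h7⟩
  -- trails `s a x r z t` and `s r z t`
  have hZt : ∀ r, r ≠ s → r ≠ t → ¬ G.Adj a r → P1 r ∨ P2 r →
      ∀ z, z ≠ s → z ≠ t → ¬ G.Adj a z → G.Adj r z → G.Adj z t := by
    rintro r hrs hrt har (hr | ⟨hne, hr1, hr2⟩) z hzs hzt haz hrz
    · obtain ⟨x, -, hxs, hxt, hax, hrx⟩ := pick r hr r
      by_contra hc
      refine hsol (Sol.mono (k := 3) (Aug.sol (Aug.step (j := a) (k := x) ?_ ?_ ?_ ?_ ?_ ?_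
        (Aug.step (j := r) (k := z) ?_ ?_ ?_ ?_ ?_ ?_
        (Aug.final ?_ ?_ ?_))) h) (by norm_num))
      all_goals try simp only [Set.mem_insert_iff, Set.mem_empty_iff_false, Sym2.eq_iff, or_false]
      all_goals grind
    · by_contra hc
      refine hsol (Sol.mono (k := 2) (Aug.sol (Aug.step (j := r) (k := z) ?_ ?_ ?_ ?_ ?_ ?_
        (Aug.final ?_ ?_ ?_)) h) (by norm_num))
      all_goals try simp only [Set.mem_insert_iff, Set.mem_empty_iff_false, Sym2.eq_iff, or_false]
      all_goals grind
  -- trails `t b x r z s` and `t r z s`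
  have hZs : ∀ r, r ≠ s → r ≠ t → ¬ G.Adj a r → P1 r ∨ P2 r →
      ∀ z, z ≠ s → z ≠ t → ¬ G.Adj a z → G.Adj r z → G.Adj z s := by
    rintro r hrs hrt har (hr | ⟨hne, hr1, hr2⟩) z hzs hzt haz hrz
    · obtain ⟨x, -, hxs, hxt, hax, hrx⟩ := pick r hr r
      by_contra hc
      refine hsol (Sol.mono (k := 3) (Aug.sol (Aug.step (j := b) (k := x) ?_ ?_ ?_ ?_ ?_ ?_
        (Aug.step (j := r) (k := z) ?_ ?_ ?_ ?_ ?_ ?_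
        (Aug.final ?_ ?_ ?_))) h.symm) (by norm_num))
      all_goals try simp only [Set.mem_insert_iff, Set.mem_empty_iff_false, Sym2.eq_iff, or_false]
      all_goals grind
    · by_contra hc
      refine hsol (Sol.mono (k := 2) (Aug.sol (Aug.step (j := r) (k := z) ?_ ?_ ?_ ?_ ?_ ?_
        (Aug.final ?_ ?_ ?_)) h.symm) (by norm_num))
      all_goals try simp only [Set.mem_insert_iff, Set.mem_empty_iff_false, Sym2.eq_iff, or_false]
      all_goals grind
  -- trails `s a x r z y b t` with `x ≠ y`, and `s r z y b t`
  have hZX : ∀ r, r ≠ s → r ≠ t → ¬ G.Adj a r → P1 r ∨ P2 r →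
      ∀ z, z ≠ s → z ≠ t → ¬ G.Adj a z → G.Adj r z →
      ∀ y, y ≠ s → y ≠ t → G.Adj a y → G.Adj z y := by
    rintro r hrs hrt har hr z hzs hzt haz hrz y hys hyt hay
    have hzs' := hZs r hrs hrt har hr z hzs hzt haz hrz
    have hzt' := hZt r hrs hrt har hr z hzs hzt haz hrz
    by_contra hc
    rcases hr with hr | ⟨hne, hr1, hr2⟩
    · obtain ⟨x, hxy, hxs, hxt, hax, hrx⟩ := pick r hr y
      refine hsol (Sol.mono (k := 4) (Aug.sol (Aug.step (j := a) (k := x) ?_ ?_ ?_ ?_ ?_ ?_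
        (Aug.step (j := r) (k := z) ?_ ?_ ?_ ?_ ?_ ?_
        (Aug.swap (Aug.step (j := b) (k := y) ?_ ?_ ?_ ?_ ?_ ?_
        (Aug.final ?_ ?_ ?_))))) h) (by norm_num))
      all_goals try simp only [Set.mem_insert_iff, Set.mem_empty_iff_false, Sym2.eq_iff, or_false]
      all_goals grind
    · refine hsol (Sol.mono (k := 3) (Aug.sol (Aug.step (j := r) (k := z) ?_ ?_ ?_ ?_ ?_ ?_
        (Aug.swap (Aug.step (j := b) (k := y) ?_ ?_ ?_ ?_ ?_ ?_
        (Aug.final ?_ ?_ ?_)))) h) (by norm_num))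
      all_goals try simp only [Set.mem_insert_iff, Set.mem_empty_iff_false, Sym2.eq_iff, or_false]
      all_goals grind
  -- trail `s a x r z w p t`
  have hmix : ∀ r, r ≠ s → r ≠ t → ¬ G.Adj a r → P1 r →
      ∀ z, z ≠ s → z ≠ t → ¬ G.Adj a z → G.Adj r z →
      ∀ p, p ≠ s → p ≠ t → ¬ G.Adj a p → P2 p →
      ∀ w, w ≠ s → w ≠ t → ¬ G.Adj a w → G.Adj p w → z ≠ w → G.Adj z w := by
    intro r hrs hrt har hr z hzs hzt haz hrz p hps hpt hap hp w hws hwt haw hpw hzw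
    have hzs' := hZs r hrs hrt har (Or.inl hr) z hzs hzt haz hrz
    have hws' := hZs p hps hpt hap (Or.inr hp) w hws hwt haw hpw
    obtain ⟨x, -, hxs, hxt, hax, hrx⟩ := pick r hr r
    have hzx := hZX r hrs hrt har (Or.inl hr) z hzs hzt haz hrz x hxs hxt hax
    have hwx := hZX p hps hpt hap (Or.inr hp) w hws hwt haw hpw x hxs hxt hax
    obtain ⟨hne, hp1, hp2⟩ := hp
    by_contra hc
    refine hsol (Sol.mono (k := 4) (Aug.sol (Aug.step (j := a) (k := x) ?_ ?_ ?_ ?_ ?_ ?_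
      (Aug.step (j := r) (k := z) ?_ ?_ ?_ ?_ ?_ ?_
      (Aug.swap (Aug.step (j := p) (k := w) ?_ ?_ ?_ ?_ ?_ ?_
      (Aug.final ?_ ?_ ?_))))) h) (by norm_num))
    all_goals try simp only [Set.mem_insert_iff, Set.mem_empty_iff_false, Sym2.eq_iff, or_false]
    all_goals grind
  -- trails `s a x r z w p y b t` with `x ≠ y`, and `s r z w p t`
  have hZZ : ∀ r, r ≠ s → r ≠ t → ¬ G.Adj a r → P1 r ∨ P2 r →
      ∀ z, z ≠ s → z ≠ t → ¬ G.Adj a z → G.Adj r z →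
      ∀ p, p ≠ s → p ≠ t → ¬ G.Adj a p → P1 p ∨ P2 p →
      ∀ w, w ≠ s → w ≠ t → ¬ G.Adj a w → G.Adj p w → z ≠ w → G.Adj z w := by
    rintro r hrs hrt har (hr | hr) z hzs hzt haz hrz p hps hpt hap (hp | hp) w hws hwt haw hpw hzw
    · obtain ⟨x, -, hxs, hxt, hax, hrx⟩ := pick r hr r
      obtain ⟨y, hyx, hys, hyt, hay, hpy⟩ := pick p hp x
      have hzs' := hZs r hrs hrt har (Or.inl hr) z hzs hzt haz hrz
      have hws' := hZs p hps hpt hap (Or.inl hp) w hws hwt haw hpw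
      have hzt' := hZt r hrs hrt har (Or.inl hr) z hzs hzt haz hrz
      have hwt' := hZt p hps hpt hap (Or.inl hp) w hws hwt haw hpw
      have hzx := hZX r hrs hrt har (Or.inl hr) z hzs hzt haz hrz x hxs hxt hax
      have hwx := hZX p hps hpt hap (Or.inl hp) w hws hwt haw hpw x hxs hxt hax
      have hzy := hZX r hrs hrt har (Or.inl hr) z hzs hzt haz hrz y hys hyt hay
      have hwy := hZX p hps hpt hap (Or.inl hp) w hws hwt haw hpw y hys hyt hay
      have hby : G.Adj b y := (hX y hys hyt).1 hay
      have hbr : ¬ G.Adj b r := fun h => har ((hX r hrs hrt).2 h)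
      have hbp : ¬ G.Adj b p := fun h => hap ((hX p hps hpt).2 h)
      by_contra hc
      clear hX hbad hXX hZs hZt hZX hmix pick
      refine hsol (Sol.mono (k := 5) (Aug.sol (Aug.step (j := a) (k := x) ?_ ?_ ?_ ?_ ?_ ?_
        (Aug.step (j := r) (k := z) ?_ ?_ ?_ ?_ ?_ ?_
        (Aug.swap (Aug.step (j := b) (k := y) ?_ ?_ ?_ ?_ ?_ ?_
        (Aug.step (j := p) (k := w) ?_ ?_ ?_ ?_ ?_ ?_
        (Aug.final ?_ ?_ ?_)))))) h) (by norm_num))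
      all_goals try simp only [Set.mem_insert_iff, Set.mem_empty_iff_false, Sym2.eq_iff, or_false]
      all_goals grind
    · exact hmix r hrs hrt har hr z hzs hzt haz hrz p hps hpt hap hp w hws hwt haw hpw hzw
    · exact (hmix p hps hpt hap hp w hws hwt haw hpw r hrs hrt har hr z hzs hzt haz hrz
        hzw.symm).symm
    · have hzs' := hZs r hrs hrt har (Or.inr hr) z hzs hzt haz hrz
      have hws' := hZs p hps hpt hap (Or.inr hp) w hws hwt haw hpw
      obtain ⟨hne, hr1, hr2⟩ := hr
      obtain ⟨-, hp1, hp2⟩ := hp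
      by_contra hc
      refine hsol (Sol.mono (k := 3) (Aug.sol (Aug.step (j := r) (k := z) ?_ ?_ ?_ ?_ ?_ ?_
        (Aug.swap (Aug.step (j := p) (k := w) ?_ ?_ ?_ ?_ ?_ ?_
        (Aug.final ?_ ?_ ?_)))) h) (by norm_num))
      all_goals try simp only [Set.mem_insert_iff, Set.mem_empty_iff_false, Sym2.eq_iff, or_false]
      all_goals grind
  -- `{s, t} ∪ Y ∪ Q` is the clique, where `Y` is `X` and `Q` holds the new neighbours of the
  -- vertices of kind `P1` or `P2`.
  let Q : Fin n → Prop := fun z => z ≠ s ∧ z ≠ t ∧ ¬ G.Adj a z ∧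
    ∃ r, r ≠ s ∧ r ≠ t ∧ ¬ G.Adj a r ∧ (P1 r ∨ P2 r) ∧ G.Adj r z
  let Y : Fin n → Prop := fun x => x ≠ s ∧ x ≠ t ∧ G.Adj a x
  let K : Finset (Fin n) := Finset.univ.filter (fun v => v = s ∨ v = t ∨ Y v ∨ Q v)
  have memK : ∀ v, v ∈ K ↔ (v = s ∨ v = t ∨ Y v ∨ Q v) := fun v => by simp [K]
  have kYs : ∀ x, Y x → G.Adj x s := fun x ⟨h1, h2, h3⟩ => hXs x h1 h2 h3
  have kYt : ∀ x, Y x → G.Adj x t := fun x ⟨h1, h2, h3⟩ => hXt x h1 h2 h3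
  have kQs : ∀ x, Q x → G.Adj x s := fun z ⟨h1, h2, h3, r, g1, g2, g3, g4, g5⟩ =>
    hZs r g1 g2 g3 g4 z h1 h2 h3 g5
  have kQt : ∀ x, Q x → G.Adj x t := fun z ⟨h1, h2, h3, r, g1, g2, g3, g4, g5⟩ =>
    hZt r g1 g2 g3 g4 z h1 h2 h3 g5
  have kYY : ∀ x y, Y x → Y y → x ≠ y → G.Adj x y :=
    fun x y ⟨h1, h2, h3⟩ ⟨g1, g2, g3⟩ => hXX x h1 h2 h3 y g1 g2 g3
  have kQY : ∀ x y, Q x → Y y → G.Adj x y :=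
    fun z y ⟨h1, h2, h3, r, g1, g2, g3, g4, g5⟩ ⟨i1, i2, i3⟩ =>
    hZX r g1 g2 g3 g4 z h1 h2 h3 g5 y i1 i2 i3
  have kQQ : ∀ x y, Q x → Q y → x ≠ y → G.Adj x y :=
    fun z y ⟨h1, h2, h3, r, g1, g2, g3, g4, g5⟩ ⟨i1, i2, i3, p, j1, j2, j3, j4, j5⟩ =>
    hZZ r g1 g2 g3 g4 z h1 h2 h3 g5 p j1 j2 j3 j4 y i1 i2 i3 j5
  refine no_clique hΔle hineq h K ((memK s).2 (by simp)) ((memK t).2 (by simp)) ?_ ?_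
  · intro u hu v hv huv
    rw [memK] at hu hv
    clear pick hZt hZs hZX hmix hZZ hbad hX hXX hXs hXt
    clear_value K Q Y
    rcases hu with rfl | rfl | hu | hu <;> rcases hv with rfl | rfl | hv | hv <;>
      grind
  · intro v hv
    rw [memK] at hv
    simp only [not_or] at hv
    obtain ⟨hvs, hvt, hvY, hvQ⟩ := hv
    have hav : ¬ G.Adj a v := fun hc => hvY ⟨hvs, hvt, hc⟩
    rcases hbad v hvs hvt hav with hgood | hP
    · refine hgood.trans (Finset.card_le_card ?_)
      intro w hw
      simp only [Finset.mem_filter, Finset.mem_univ, true_and, memK] at hw ⊢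
      refine ⟨?_, hw.2⟩
      by_cases h1 : w = s
      · exact Or.inl h1
      by_cases h2 : w = t
      · exact Or.inr (Or.inl h2)
      exact Or.inr (Or.inr (Or.inl ⟨h1, h2, by tauto⟩))
    · have hdv : deg G v = d v := by simpa [hvs, hvt] using h v
      refine (hδle v).trans ?_
      rw [← hdv, deg_eq_card]
      refine Finset.card_le_card ?_
      intro w hw
      simp only [Finset.mem_filter, Finset.mem_univ, true_and, memK] at hw ⊢
      refine ⟨?_, hw⟩
      by_cases h1 : w = s
      · exact Or.inl h1
      by_cases h2 : w = t
      · exact Or.inr (Or.inl h2)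
      by_cases h3 : G.Adj a w
      · exact Or.inr (Or.inr (Or.inl ⟨h1, h2, h3⟩))
      · exact Or.inr (Or.inr (Or.inr ⟨h1, h2, h3, v, hvs, hvt, hav, hP, hw⟩))

end core

/-! ### The three positions of the deficient vertices -/

section cases

variable {n : ℕ} {d : Fin n → ℕ} {G : SimpleGraph (Fin n)} {s t : Fin n}

open Classical in
/-- If `r` misses at most one vertex of `X = N(a) \ {s, t}` and is adjacent to every vertex of
`S ⊆ {s, t}`, then it has at least `|X| + |S| - 1` neighbours in `{s, t} ∪ N(a)`. -/
theorem nbrs_of_few_missing {a r : Fin n} (S : Finset (Fin n))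
    (hS : ∀ v ∈ S, (v = s ∨ v = t) ∧ G.Adj r v)
    (hfew : ¬ ∃ x y, x ≠ y ∧ x ≠ s ∧ x ≠ t ∧ y ≠ s ∧ y ≠ t ∧ G.Adj a x ∧ G.Adj a y ∧
        ¬ G.Adj r x ∧ ¬ G.Adj r y) :
    (Finset.univ.filter (fun v => v ≠ s ∧ v ≠ t ∧ G.Adj a v)).card + S.card ≤
      (Finset.univ.filter (fun v => (v = s ∨ v = t ∨ G.Adj a v) ∧ G.Adj r v)).card + 1 := by
  set X := Finset.univ.filter (fun v => v ≠ s ∧ v ≠ t ∧ G.Adj a v) with hX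
  have h1 : (X.filter (fun v => ¬ G.Adj r v)).card ≤ 1 := by
    rw [Finset.card_le_one]
    intro x hx y hy
    by_contra hxy
    simp only [hX, Finset.mem_filter, Finset.mem_univ, true_and] at hx hy
    exact hfew ⟨x, y, hxy, hx.1.1, hx.1.2.1, hy.1.1, hy.1.2.1, hx.1.2.2, hy.1.2.2, hx.2, hy.2⟩
  have h2 := Finset.card_filter_add_card_filter_not (s := X) (fun v => G.Adj r v)
  have h3 : Disjoint (X.filter (fun v => G.Adj r v)) S := by
    rw [Finset.disjoint_left]
    intro v hv hv'
    have := hS v hv'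
    simp only [hX, Finset.mem_filter, Finset.mem_univ, true_and] at hv
    tauto
  have h4 : (X.filter (fun v => G.Adj r v) ∪ S).card ≤
      (Finset.univ.filter (fun v => (v = s ∨ v = t ∨ G.Adj a v) ∧ G.Adj r v)).card := by
    refine Finset.card_le_card ?_
    intro v hv
    rw [Finset.mem_union] at hv
    rcases hv with hv | hv
    · simp only [hX, Finset.mem_filter, Finset.mem_univ, true_and] at hv ⊢
      tauto
    · have := hS v hv
      simp only [Finset.mem_filter, Finset.mem_univ, true_and]
      tauto
  rw [Finset.card_union_of_disjoint h3] at h4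
  omega

open Classical in
theorem card_nbrs_ge {δ : ℕ} (hδle : ∀ v, δ ≤ d v) (h : Deficit d G s t) {a : Fin n} (has : a ≠ s)
    (hat : a ≠ t) (S : Finset (Fin n)) (hS : ∀ v, (v = s ∨ v = t) → G.Adj a v → v ∈ S) :
    δ ≤ (Finset.univ.filter (fun v => v ≠ s ∧ v ≠ t ∧ G.Adj a v)).card + S.card := by
  have hda : deg G a = d a := by simpa [has, hat] using h a
  refine (hδle a).trans ?_
  rw [← hda, deg_eq_card]
  refine (Finset.card_le_card ?_).trans (Finset.card_union_le _ _)
  intro v hv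
  simp only [Finset.mem_filter, Finset.mem_univ, true_and, Finset.mem_union] at hv ⊢
  by_cases hvs : v = s ∨ v = t
  · exact Or.inr (hS v hvs hv)
  · left; tauto

open Classical in
/-- `core` applies with `a = b` when `s ≠ t` have a common non-neighbour `a`. -/
theorem common_nonadj {δ Δ : ℕ} (hδle : ∀ v, δ ≤ d v) (hΔle : ∀ v, d v ≤ Δ)
    (hineq : ((Δ : ℤ) - (δ : ℤ) + 1) ^ 2 ≤ 4 * (δ : ℤ) * ((n : ℤ) - (Δ : ℤ) - 1))
    (h : Deficit d G s t) (hst : s ≠ t) {a : Fin n} (has : a ≠ s) (hat : a ≠ t)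
    (hsa : ¬ G.Adj s a) (hta : ¬ G.Adj t a) : Sol d 5 G := by
  refine core hδle hΔle hineq h has hat has hat hsa hta (fun h => absurd h hst)
    (fun _ _ _ => Iff.rfl) ?_
  intro r hrs hrt har
  by_cases hP : ∃ x y, x ≠ y ∧ x ≠ s ∧ x ≠ t ∧ y ≠ s ∧ y ≠ t ∧ G.Adj a x ∧ G.Adj a y ∧
        ¬ G.Adj r x ∧ ¬ G.Adj r y
  · exact Or.inr (Or.inl hP)
  have hca := card_nbrs_ge hδle h has hat ∅ (by
    rintro v (rfl | rfl) hv
    exacts [absurd hv.symm hsa, absurd hv.symm hta])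
  have hone : ∀ v, (v = s ∨ v = t) → G.Adj v r →
      δ ≤ (Finset.univ.filter (fun v => (v = s ∨ v = t ∨ G.Adj a v) ∧ G.Adj r v)).card := by
    intro v hv hvr
    have := nbrs_of_few_missing (G := G) (s := s) (t := t) {v} (by simpa using ⟨hv, hvr.symm⟩) hP
    simp only [Finset.card_singleton, Finset.card_empty] at this hca
    omega
  by_cases h1 : G.Adj s r
  · exact Or.inl (hone s (Or.inl rfl) h1)
  by_cases h2 : G.Adj t r
  · exact Or.inl (hone t (Or.inr rfl) h2)
  exact Or.inr (Or.inr ⟨hst, h1, h2⟩)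

open Classical in
/-- Two units of deficit at `s`: if two non-neighbours of `s` have different neighbourhoods, one
step leads to the situation of `common_nonadj`; otherwise `core` applies directly. -/
theorem double_deficit {δ Δ : ℕ} (hδle : ∀ v, δ ≤ d v) (hΔle : ∀ v, d v ≤ Δ) (hδΔ : δ ≤ Δ)
    (hineq : ((Δ : ℤ) - (δ : ℤ) + 1) ^ 2 ≤ 4 * (δ : ℤ) * ((n : ℤ) - (Δ : ℤ) - 1))
    (h : Deficit d G s s) : Sol d 6 G := by
  -- Moving one unit along `s a x` leaves `b` non-adjacent to both deficient vertices `s` and `x`,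
  -- unless `s` and `x` are themselves non-adjacent.
  by_cases hdiff : ∃ a b x, a ≠ s ∧ b ≠ s ∧ ¬ G.Adj s a ∧ ¬ G.Adj s b ∧ G.Adj a x ∧ ¬ G.Adj b x
  · obtain ⟨a, b, x, has, hbs, hsa, hsb, hax, hbx⟩ := hdiff
    refine Sol.step (j := a) (k := x) h has has hsa hax (fun G' hG' hA => ?_)
    have hxs : x ≠ s := by rintro rfl; exact hsa hax.symm
    have hax' := hax.ne
    have hab : a ≠ b := by rintro rfl; exact hbx hax
    by_cases hsx : G.Adj s x
    · have hbx' : b ≠ x := by rintro rfl; exact hsb hsx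
      refine common_nonadj (a := b) hδle hΔle hineq hG' hxs hbx' hbs ?_ ?_
      · have := fun h : G.Adj x b => hbx h.symm
        simp only [hA, ne_eq, Sym2.eq_iff]
        grind
      · simp only [hA, ne_eq, Sym2.eq_iff]
        grind
    · refine Sol.mono (Sol.final hG' hxs ?_ 0) (by norm_num)
      have := fun h : G.Adj x s => hsx h.symm
      simp only [hA, ne_eq, Sym2.eq_iff]
      grind
  -- otherwise all non-neighbours of `s` have the same neighbourhood
  · push Not at hdiff
    obtain ⟨a, b, hab, has, hbs, hsa, hsb⟩ := two_le_card_nonadj hΔle hδΔ hineq h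
    refine (core hδle hΔle hineq h has has hbs hbs hsa hsb (fun _ => hab)
      (fun v _ _ => ⟨hdiff a b v has hbs hsa hsb, hdiff b a v hbs has hsb hsa⟩) ?_).mono
      (by norm_num)
    intro r hrs _ har
    by_cases hP : ∃ x y, x ≠ y ∧ x ≠ s ∧ x ≠ s ∧ y ≠ s ∧ y ≠ s ∧ G.Adj a x ∧ G.Adj a y ∧
        ¬ G.Adj r x ∧ ¬ G.Adj r y
    · exact Or.inr (Or.inl hP)
    left
    have hca := card_nbrs_ge hδle h has has ∅ (by
      rintro v (rfl | rfl) hv <;> exact absurd hv.symm hsa)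
    by_cases hsr : G.Adj s r
    · have := nbrs_of_few_missing (G := G) (s := s) (t := s) {s} (by simpa using hsr.symm) hP
      simp only [Finset.card_singleton, Finset.card_empty] at this hca
      omega
    · refine hca.trans ?_
      rw [Finset.card_empty, add_zero]
      refine Finset.card_le_card ?_
      intro v hv
      simp only [Finset.mem_filter, Finset.mem_univ, true_and] at hv ⊢
      exact ⟨Or.inr (Or.inr hv.2.2), hdiff a r v has hrs hsa hsr hv.2.2⟩

/-- If `sa`, `tb` are non-edges and some `x ∈ N(a)` is not adjacent to `b`, moving one unit of
deficit along `s a x` either makes `b` a common non-neighbour of the deficient vertices `x` and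
`t`, or makes these two non-adjacent, so that one more step suffices. -/
theorem disjoint_step {δ Δ : ℕ} (hδle : ∀ v, δ ≤ d v) (hΔle : ∀ v, d v ≤ Δ)
    (hineq : ((Δ : ℤ) - (δ : ℤ) + 1) ^ 2 ≤ 4 * (δ : ℤ) * ((n : ℤ) - (Δ : ℤ) - 1))
    (h : Deficit d G s t) {a b x : Fin n} (has : a ≠ s) (hat : a ≠ t)
    (hbs : b ≠ s) (hbt : b ≠ t) (hsa : ¬ G.Adj s a) (htb : ¬ G.Adj t b) (hab : a ≠ b)
    (hst : s ≠ t) (hxt : x ≠ t) (hax : G.Adj a x) (hbx : ¬ G.Adj b x) : Sol d 6 G := by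
  refine Sol.step (j := a) (k := x) h has hat hsa hax (fun G' hG' hA => ?_)
  have hxs : x ≠ s := by rintro rfl; exact hsa hax.symm
  have hax' := hax.ne
  by_cases htx : G.Adj t x
  · have hbx' : b ≠ x := by rintro rfl; exact htb htx
    refine common_nonadj (a := b) hδle hΔle hineq hG' hxt hbx' hbt ?_ ?_
    · have := fun h : G.Adj x b => hbx h.symm
      simp only [hA, ne_eq, Sym2.eq_iff]
      grind
    · simp only [hA, ne_eq, Sym2.eq_iff]
      grind
  · refine Sol.mono (Sol.final hG' hxt ?_ 0) (by norm_num)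
    have := fun h : G.Adj x t => htx h.symm
    simp only [hA, ne_eq, Sym2.eq_iff]
    grind

open Classical in
/-- Deficits at `s ≠ t`. If `s` and `t` have no common non-neighbour and `disjoint_step` never
applies, all non-neighbours of `s` or `t` have the same neighbourhood outside `{s, t}`, and `core`
applies to any `a` and `b`. -/
theorem distinct_deficit {δ Δ : ℕ} (hδle : ∀ v, δ ≤ d v) (hΔle : ∀ v, d v ≤ Δ) (hδΔ : δ ≤ Δ)
    (hineq : ((Δ : ℤ) - (δ : ℤ) + 1) ^ 2 ≤ 4 * (δ : ℤ) * ((n : ℤ) - (Δ : ℤ) - 1))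
    (h : Deficit d G s t) (hst : s ≠ t) : Sol d 6 G := by
  by_cases hadj : G.Adj s t
  swap
  · exact (Sol.final h hst hadj 0).mono (by norm_num)
  by_cases hcom : ∃ a, a ≠ s ∧ a ≠ t ∧ ¬ G.Adj s a ∧ ¬ G.Adj t a
  · obtain ⟨a, has, hat, hsa, hta⟩ := hcom
    exact (common_nonadj hδle hΔle hineq h hst has hat hsa hta).mono (by norm_num)
  push Not at hcom
  by_contra hsol
  obtain ⟨a, -, -, has, -, hsa, -⟩ := two_le_card_nonadj hΔle hδΔ hineq h
  obtain ⟨b, -, -, hbt, -, htb, -⟩ := two_le_card_nonadj hΔle hδΔ hineq h.symm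
  have hsA : ∀ a, ¬ G.Adj s a → a ≠ t := by rintro a ha rfl; exact ha hadj
  have htB : ∀ b, ¬ G.Adj t b → b ≠ s := by rintro b hb rfl; exact hb hadj.symm
  have hAB : ∀ a b, a ≠ s → b ≠ t → ¬ G.Adj s a → ¬ G.Adj t b → a ≠ b := by
    rintro a b ha hb hsa htb rfl
    exact htb (hcom a ha hb hsa)
  have h1 : ∀ a b x, a ≠ s → b ≠ t → ¬ G.Adj s a → ¬ G.Adj t b → x ≠ t → G.Adj a x →
      G.Adj b x := by
    intro a b x has hbt hsa htb hxt hax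
    by_contra hbx
    exact hsol (disjoint_step hδle hΔle hineq h has (hsA a hsa) (htB b htb) hbt hsa htb
      (hAB a b has hbt hsa htb) hst hxt hax hbx)
  have h2 : ∀ a b x, a ≠ s → b ≠ t → ¬ G.Adj s a → ¬ G.Adj t b → x ≠ s → G.Adj b x →
      G.Adj a x := by
    intro a b x has hbt hsa htb hxs hbx
    by_contra hax
    exact hsol (disjoint_step hδle hΔle hineq h.symm hbt (htB b htb) (hsA a hsa) has htb hsa
      (hAB a b has hbt hsa htb).symm hst.symm hxs hbx hax)
  have hat := hsA a hsa
  have hbs := htB b htb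
  have hX : ∀ v, v ≠ s → v ≠ t → (G.Adj a v ↔ G.Adj b v) := fun v hvs hvt =>
    ⟨h1 a b v has hbt hsa htb hvt, h2 a b v has hbt hsa htb hvs⟩
  refine hsol ((core hδle hΔle hineq h has hat hbs hbt hsa htb (fun h => absurd h hst) hX
    ?_).mono (by norm_num))
  intro r hrs hrt har
  by_cases hP : ∃ x y, x ≠ y ∧ x ≠ s ∧ x ≠ t ∧ y ≠ s ∧ y ≠ t ∧ G.Adj a x ∧ G.Adj a y ∧
        ¬ G.Adj r x ∧ ¬ G.Adj r y
  · exact Or.inr (Or.inl hP)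
  left
  -- a non-neighbour of `s` or `t` has all of its neighbours in `{s, t} ∪ N(a)`
  have hall : (∀ v, v ≠ s → v ≠ t → G.Adj r v → G.Adj a v) →
      δ ≤ (Finset.univ.filter (fun v => (v = s ∨ v = t ∨ G.Adj a v) ∧ G.Adj r v)).card := by
    intro hr
    have hdr : deg G r = d r := by simpa [hrs, hrt] using h r
    refine (hδle r).trans ?_
    rw [← hdr, deg_eq_card]
    refine Finset.card_le_card ?_
    intro v hv
    simp only [Finset.mem_filter, Finset.mem_univ, true_and] at hv ⊢
    refine ⟨?_, hv⟩
    by_cases hvs : v = s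
    · exact Or.inl hvs
    by_cases hvt : v = t
    · exact Or.inr (Or.inl hvt)
    exact Or.inr (Or.inr (hr v hvs hvt hv))
  by_cases hsr : G.Adj s r
  swap
  · exact hall fun v hvs hvt hrv =>
      h2 a b v has hbt hsa htb hvs (h1 r b v hrs hbt hsr htb hvt hrv)
  by_cases htr : G.Adj t r
  swap
  · exact hall fun v hvs hvt hrv => h2 a r v has hrt hsa htr hvs hrv
  -- `t` may be a neighbour of `a`, so only `|X| ≥ δ - 1`; but `r` is adjacent to both `s` and `t`
  have hca := card_nbrs_ge hδle h has hat {t} (by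
    rintro v (rfl | rfl) hv
    exacts [absurd hv.symm hsa, by simp])
  have := nbrs_of_few_missing (G := G) (s := s) (t := t) {s, t} (by
    simpa using ⟨hsr.symm, htr.symm⟩) hP
  rw [Finset.card_singleton] at hca
  rw [Finset.card_pair hst] at this
  omega

end cases

/-! ### Parity -/

open Classical in
theorem sum_deg_even {n : ℕ} (G : SimpleGraph (Fin n)) : Even (∑ v, deg G v) := by
  have h : ∀ v, deg G v = G.degree v := fun v => by
    rw [deg_eq_card, ← G.card_neighborFinset_eq_degree, G.neighborFinset_eq_filter]
  simp only [h, G.sum_degrees_eq_twice_card_edges, even_two_mul]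

open Classical in
/-- A non-realization in `𝒢'(d)` has total deficit exactly two, by parity of degree sums. -/
theorem exists_deficit {n : ℕ} {d : Fin n → ℕ} {G H : SimpleGraph (Fin n)} (hH : memG d H)
    (hG : memG' d G) (hnot : ¬ memG d G) : ∃ s t, Deficit d G s t := by
  obtain ⟨hle, hsum⟩ := hG
  have hd : ∑ v, d v = ∑ v, deg H v := Finset.sum_congr rfl fun v _ => (hH v).symm
  have hadd : ∑ v, (d v - deg G v) + ∑ v, deg G v = ∑ v, d v := by
    rw [← Finset.sum_add_distrib]
    exact Finset.sum_congr rfl fun v _ => Nat.sub_add_cancel (hle v)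
  have heven : Even (∑ v, (d v - deg G v)) := by
    have h1 := sum_deg_even G
    have h2 := sum_deg_even H
    rw [← hd, ← hadd] at h2
    exact (Nat.even_add.1 h2).2 h1
  obtain ⟨s, hs⟩ : ∃ s, deg G s < d s := by
    by_contra hc
    push Not at hc
    exact hnot fun v => (hle v).antisymm (hc v)
  have hsplit := Finset.add_sum_erase Finset.univ (fun v => d v - deg G v) (Finset.mem_univ s)
  have htwo : ∑ v, (d v - deg G v) = 2 := by
    obtain ⟨k, hk⟩ := heven
    omega
  by_cases hs2 : d s - deg G s = 2
  · refine ⟨s, s, fun v => ?_⟩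
    have h0 : ∑ v ∈ Finset.univ.erase s, (d v - deg G v) = 0 := by omega
    rw [Finset.sum_eq_zero_iff] at h0
    by_cases hv : v = s
    · subst hv
      simp
      omega
    · have := h0 v (by simp [hv])
      have := hle v
      simp [hv]
      omega
  · have h1 : ∑ v ∈ Finset.univ.erase s, (d v - deg G v) = 1 := by omega
    obtain ⟨t, ht, htne⟩ := Finset.exists_ne_zero_of_sum_ne_zero (s := Finset.univ.erase s)
      (f := fun v => d v - deg G v) (by rw [h1]; norm_num)
    have hsplit' : d t - deg G t + ∑ v ∈ (Finset.univ.erase s).erase t, (d v - deg G v)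
        = ∑ v ∈ Finset.univ.erase s, (d v - deg G v) :=
      Finset.add_sum_erase (Finset.univ.erase s) (fun v => d v - deg G v) ht
    have htne' : d t - deg G t ≠ 0 := htne
    have ht1 : d t - deg G t = 1 := by omega
    have hz : ∑ v ∈ (Finset.univ.erase s).erase t, (d v - deg G v) = 0 := by omega
    rw [Finset.sum_eq_zero_iff] at hz
    have ht0 : ∀ v, v ≠ s → v ≠ t → d v - deg G v = 0 :=
      fun v h1 h2 => hz v (by simp [h1, h2])
    refine ⟨s, t, fun v => ?_⟩
    simp only [Finset.mem_erase, Finset.mem_univ, and_true] at ht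
    have := hle v
    by_cases hv : v = s
    · subst hv
      simp [ht.symm]
      omega
    · by_cases hvt : v = t
      · subst hvt
        simp [hv]
        omega
      · have := ht0 v hv hvt
        simp [hv, hvt]
        omega

/-- Corollary 3.3. If `(Δ − δ + 1)² ≤ 4δ(n − Δ − 1)`, where
`δ`, `Δ` are the minimum and maximum entries of the graphical degree sequence
`d`, then `k_JS(d) ≤ 6`. -/
theorem stmt2 {n : ℕ} (d : Fin n → ℕ) (δ Δ : ℕ)
    (hdpos : ∀ v, 1 ≤ d v)
    (hgraphical : ∃ H : SimpleGraph (Fin n), memG d H)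
    (hδle : ∀ v, δ ≤ d v) (hδeq : ∃ v, d v = δ)
    (hΔle : ∀ v, d v ≤ Δ) (hΔeq : ∃ v, d v = Δ)
    (hineq : ((Δ : ℤ) - (δ : ℤ) + 1) ^ 2 ≤ 4 * (δ : ℤ) * ((n : ℤ) - (Δ : ℤ) - 1)) :
    ∀ G : SimpleGraph (Fin n), memG' d G →
      ∃ H : SimpleGraph (Fin n), memG d H ∧ jsDistLe d 6 G H := by
  intro G hG
  obtain ⟨H, hH⟩ := hgraphical
  change Sol d 6 G
  by_cases hmem : memG d G
  · exact Sol.of_memG' hmem hG 6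
  obtain ⟨s, t, h⟩ := exists_deficit hH hG hmem
  have hδΔ : δ ≤ Δ := (hδle s).trans (hΔle s)
  by_cases hst : s = t
  · subst hst
    exact double_deficit hδle hΔle hδΔ hineq h
  · exact distinct_deficit hδle hΔle hδΔ hineq h hst
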